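/- (Solution of the Kolmogorov problem for orders (0,k,r−2,r)) Let r ≥ 4 and 0 < k < r−2 be integers, and let f ∈ L^r_{∞,∞} be non-constant. Then there exist α, b > 0 and c, d ≥ 0 such that the function g = α·ψ_r(0,b,c) + d satisfies M_0(g) = M_0(f), M_k(g) = M_k(f), M_{r−2}(g) = M_{r−2}(f), and M_r(g) = M_r(f). -/

import Mathlib

open MeasureTheory Filter

noncomputable section

/-- The uniform norm `‖f‖ = sup_{t ∈ ℝ} |f t|` of a function `f : ℝ → ℝ`. -/
def unif (f : ℝ → ℝ) : ℝ := ⨆ t : ℝ, |f t|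

/-- `M k f = ‖f⁽ᵏ⁾‖`, the uniform norm of the `k`-th derivative of `f`. -/
def M (k : ℕ) (f : ℝ → ℝ) : ℝ := unif (iteratedDeriv k f)

/-- The class `L^r_{∞,∞}`: bounded functions `f : ℝ → ℝ` having `r-1` (continuous)
derivatives, with `f⁽ʳ⁻¹⁾` locally absolutely continuous and `f⁽ʳ⁾` essentially bounded;
the last two conditions are equivalent to `f⁽ʳ⁻¹⁾` being Lipschitz. -/
def MemL (r : ℕ) (f : ℝ → ℝ) : Prop :=
  Continuous f ∧ (∃ C : ℝ, ∀ t : ℝ, |f t| ≤ C) ∧ ContDiff ℝ (r - 1 : ℕ) f ∧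
    ∃ K : NNReal, LipschitzWith K (iteratedDeriv (r - 1) f)

/-- The Euler perfect spline `φ_r`: the `r`-th `2π`-periodic antiderivative with zero
mean value of `t ↦ sgn (sin t)`. -/
def eulerPhi : ℕ → ℝ → ℝ
  | 0 => fun t => Real.sign (Real.sin t)
  | (s + 1) => fun t =>
      (∫ x in (0:ℝ)..t, eulerPhi s x) -
        (1 / (2 * Real.pi)) * ∫ x in (0:ℝ)..(2 * Real.pi), ∫ u in (0:ℝ)..x, eulerPhi s u

/-- `φ_{λ,r}(t) = λ^{-r} φ_r (λ t)`. -/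
def eulerPhiL (lam : ℝ) (r : ℕ) (t : ℝ) : ℝ := lam ^ (-(r : ℤ)) * eulerPhi r (lam * t)

/-- The basic step function: `0` on `[0,a]`, `1` on `(a, a+b]`, `0` after `a+b`. -/
def psiBase (a b : ℝ) (t : ℝ) : ℝ := if t ≤ a then 0 else if t ≤ a + b then 1 else 0

/-- `psiBase` continued evenly with respect to the point `a+b+c`. -/
def psiHalf (a b c t : ℝ) : ℝ :=
  if t ≤ a + b + c then psiBase a b t else psiBase a b (2 * (a + b + c) - t)

/-- The Rodov step function `ψ_0(a,b,c)`: equal to `psiBase` on `[0, a+b+c]`, continued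
evenly with respect to `a+b+c`, then oddly with respect to `2(a+b+c)`, then
`4(a+b+c)`-periodically. -/
def psiZero (a b c t : ℝ) : ℝ :=
  if (t - 4 * (a + b + c) * ⌊t / (4 * (a + b + c))⌋) ≤ 2 * (a + b + c) then
    psiHalf a b c (t - 4 * (a + b + c) * ⌊t / (4 * (a + b + c))⌋)
  else
    -psiHalf a b c (4 * (a + b + c) - (t - 4 * (a + b + c) * ⌊t / (4 * (a + b + c))⌋))

/-- `ψ_s(a,b,c)`: the `s`-th periodic antiderivative of `ψ_0(a,b,c)` with zero mean
value over the period `[0, 4(a+b+c)]`. -/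
def psi : ℕ → ℝ → ℝ → ℝ → ℝ → ℝ
  | 0 => psiZero
  | (s + 1) => fun a b c t =>
      (∫ x in (0:ℝ)..t, psi s a b c x) -
        (1 / (4 * (a + b + c))) *
          ∫ x in (0:ℝ)..(4 * (a + b + c)), ∫ u in (0:ℝ)..x, psi s a b c u

/-- The modulus of continuity `ω(D^k, X; δ) = sup {‖f⁽ᵏ⁾‖ : f ∈ X, ‖f‖ ≤ δ}` of the
differentiation operator `D^k` on a class `X`. -/
def omegaMod (k : ℕ) (X : Set (ℝ → ℝ)) (δ : ℝ) : ℝ :=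
  sSup {y : ℝ | ∃ f ∈ X, M 0 f ≤ δ ∧ M k f = y}

end

/-!
Take `α = M_r(f)` and choose `b` so that `M_{r-2}(f) = α b² / 2`. From a common level, `f⁽ʳ⁻²⁾`
never falls faster than the wave `α ψ_2(0,b,0)`, nor, since lengthening the plateau `c` of a wave
only delays its fall, than `α ψ_2(0,b,c)` for any `c ≥ 0`. This comparison property passes from a
derivative to its bounded primitive `F` as soon as the plateau is long enough for the wave to
reach `‖F‖`, and it yields a lower bound for `‖F‖` by the norm of the wave at the current plateau.
Since the norm of the wave is continuous, increasing and unbounded in `c`, the plateau can be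
lengthened to match `‖F‖` exactly. Going down from order `r - 2` to `k` gives a plateau `c` with
equality at order `k`; continuing to order `0` gives a plateau `c' ≥ c`, so at plateau `c` the
wave has norm at most `M_0(f)`, and the constant `d` makes up the difference.
-/

section UniformNorm

variable {f : ℝ → ℝ}

theorem abs_le_unif (hf : ∃ C, ∀ t, |f t| ≤ C) (t : ℝ) : |f t| ≤ unif f := by
  obtain ⟨C, hC⟩ := hf
  exact le_ciSup (f := fun t => |f t|) ⟨C, Set.forall_mem_range.2 hC⟩ t

theorem unif_const_mul {α : ℝ} (hα : 0 ≤ α) (f : ℝ → ℝ) : unif (fun t => α * f t) = α * unif f := by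
  simp only [unif, abs_mul, abs_of_nonneg hα, Real.mul_iSup_of_nonneg hα]

theorem unif_add_const_of_apply_eq {A d x : ℝ} (hd : 0 ≤ d) (hle : ∀ t, |f t| ≤ A) (hx : f x = A) :
    unif (fun t => f t + d) = A + d := by
  have hadd_le (t : ℝ) : |f t + d| ≤ A + d :=
    (abs_add_le _ _).trans (add_le_add (hle t) (abs_of_nonneg hd).le)
  refine le_antisymm (ciSup_le hadd_le) ?_
  calc A + d = f x + d := by rw [hx]
    _ ≤ |f x + d| := le_abs_self _
    _ ≤ unif (fun t => f t + d) := abs_le_unif ⟨_, hadd_le⟩ x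

theorem unif_eq_of_apply_eq {A x : ℝ} (hle : ∀ t, |f t| ≤ A) (hx : f x = A) : unif f = A := by
  simpa only [add_zero] using unif_add_const_of_apply_eq le_rfl hle hx

theorem M_const_mul_add_const {α : ℝ} (hα : 0 ≤ α) (d : ℝ) {j : ℕ} (hj : 0 < j) (f : ℝ → ℝ) :
    M j (fun t => α * f t + d) = α * M j f := by
  have hderiv : iteratedDeriv j (fun t => α * f t + d) = fun t => α * iteratedDeriv j f t := by
    funext t
    simp only [add_comm _ d, iteratedDeriv_const_add hj, iteratedDeriv_const_mul_field]
  rw [M, M, hderiv, unif_const_mul hα]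

theorem abs_sub_le_unif_deriv_mul {K : NNReal} (hf : LipschitzWith K f) (x y : ℝ) :
    |f x - f y| ≤ unif (deriv f) * |x - y| := by
  have hbdd : ∃ C, ∀ t, |deriv f t| ≤ C := ⟨K, fun _ => norm_deriv_le_of_lipschitz hf⟩
  have habs := (hf.lipschitzOnWith (s := Set.uIcc y x)).absolutelyContinuousOnInterval
  rw [← habs.integral_deriv_eq_sub]
  exact intervalIntegral.norm_integral_le_of_norm_le_const (f := deriv f)
    fun t _ => abs_le_unif hbdd t

end UniformNorm

section BoundedDerivatives

variable {f : ℝ → ℝ} {n : ℕ}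

theorem hasDerivAt_iteratedDeriv_of_contDiff {j : ℕ} (hf : ContDiff ℝ n f) (hj : j < n) (x : ℝ) :
    HasDerivAt (iteratedDeriv j f) (iteratedDeriv (j + 1) f x) x := by
  rw [iteratedDeriv_succ]
  exact (hf.differentiable_iteratedDeriv j (mod_cast hj) x).hasDerivAt

/- Rolle argument for the `n`-th forward difference of step `h`: it is at most `2 ^ n * C` and
equals `h ^ n` times a value of the `n`-th derivative. -/
theorem exists_abs_iteratedDeriv_mul_pow_le {C h : ℝ} (hf : ContDiff ℝ n f) (hC : ∀ t, |f t| ≤ C)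
    (hh : 0 < h) (x : ℝ) :
    ∃ ξ ∈ Set.Icc x (x + n * h), |iteratedDeriv n f ξ| * h ^ n ≤ 2 ^ n * C := by
  induction n generalizing f C with
  | zero => exact ⟨x, by simp, by simpa using hC x⟩
  | succ n ih =>
    have hfn : ContDiff ℝ n f := hf.of_le (mod_cast n.le_succ)
    have hshift : ContDiff ℝ n fun t => f (t + h) := hfn.comp (contDiff_id.add contDiff_const)
    obtain ⟨ξ, ⟨hxξ, hξx⟩, hξ⟩ := ih (hshift.sub hfn) (C := 2 * C) fun t =>
      (abs_sub _ _).trans (by linarith [hC (t + h), hC t])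
    have hdiff : iteratedDeriv n (fun t => f (t + h) - f t) ξ =
        iteratedDeriv n f (ξ + h) - iteratedDeriv n f ξ := by
      rw [iteratedDeriv_fun_sub hshift.contDiffAt hfn.contDiffAt, iteratedDeriv_comp_add_const]
    have hderiv (y : ℝ) := hasDerivAt_iteratedDeriv_of_contDiff hf n.lt_succ_self y
    obtain ⟨η, ⟨hξη, hηξ⟩, hη⟩ := exists_hasDerivAt_eq_slope (iteratedDeriv n f)
      (iteratedDeriv (n + 1) f) (lt_add_of_pos_right ξ hh)
      (fun y _ => (hderiv y).continuousAt.continuousWithinAt) fun y _ => hderiv y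
    refine ⟨η, ⟨by linarith, by push_cast; linarith⟩, ?_⟩
    calc |iteratedDeriv (n + 1) f η| * h ^ (n + 1)
        = |iteratedDeriv n f (ξ + h) - iteratedDeriv n f ξ| * h ^ n := by
          rw [hη, add_sub_cancel_left, abs_div, abs_of_pos hh]
          field_simp
          ring
      _ ≤ 2 ^ n * (2 * C) := by rwa [← hdiff]
      _ = 2 ^ (n + 1) * C := by ring

theorem exists_abs_iteratedDeriv_le_of_lipschitzWith {K : NNReal} (hf : ContDiff ℝ n f)
    (hbdd : ∃ C, ∀ t, |f t| ≤ C) (hlip : LipschitzWith K (iteratedDeriv n f)) :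
    ∃ C, ∀ t, |iteratedDeriv n f t| ≤ C := by
  obtain ⟨C, hC⟩ := hbdd
  refine ⟨K * n + 2 ^ n * C, fun t => ?_⟩
  obtain ⟨ξ, ⟨htξ, hξt⟩, hξ⟩ := exists_abs_iteratedDeriv_mul_pow_le hf hC one_pos t
  rw [one_pow, mul_one] at hξ
  have hdist : |iteratedDeriv n f t - iteratedDeriv n f ξ| ≤ K * |t - ξ| := hlip.dist_le_mul t ξ
  have htξn : |t - ξ| ≤ n := abs_le.2 ⟨by linarith, by linarith [n.cast_nonneg (α := ℝ)]⟩
  calc |iteratedDeriv n f t|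
      ≤ |iteratedDeriv n f t - iteratedDeriv n f ξ| + |iteratedDeriv n f ξ| := by
        simpa using abs_add_le (iteratedDeriv n f t - iteratedDeriv n f ξ) (iteratedDeriv n f ξ)
    _ ≤ K * n + 2 ^ n * C := by gcongr; exact hdist.trans (by gcongr)

theorem exists_abs_iteratedDeriv_le_of_lipschitzWith_of_le {K : NNReal} (hf : ContDiff ℝ n f)
    (hbdd : ∃ C, ∀ t, |f t| ≤ C) (hlip : LipschitzWith K (iteratedDeriv n f)) {j : ℕ}
    (hj : j ≤ n) : ∃ C, ∀ t, |iteratedDeriv j f t| ≤ C := by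
  induction n generalizing K with
  | zero => simpa [Nat.le_zero.1 hj] using hbdd
  | succ n ih =>
    obtain ⟨C, hC⟩ := exists_abs_iteratedDeriv_le_of_lipschitzWith hf hbdd hlip
    rcases hj.lt_or_eq with hlt | rfl
    · have hderiv (x : ℝ) := hasDerivAt_iteratedDeriv_of_contDiff hf n.lt_succ_self x
      have hlip' : LipschitzWith C.toNNReal (iteratedDeriv n f) :=
        lipschitzWith_of_nnnorm_deriv_le (fun x => (hderiv x).differentiableAt) fun x => by
          rw [(hderiv x).deriv, ← NNReal.coe_le_coe]
          exact (hC x).trans (Real.le_coe_toNNReal C)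
      exact ih (hf.of_le (mod_cast n.le_succ)) hlip' (Nat.lt_succ_iff.1 hlt)
    · exact ⟨C, hC⟩

theorem iteratedDeriv_eq_zero_of_bounded_of_const {κ : ℝ} (hf : ContDiff ℝ n f) (hn : n ≠ 0)
    (hbdd : ∃ C, ∀ t, |f t| ≤ C) (hconst : ∀ x, iteratedDeriv n f x = κ) : κ = 0 := by
  obtain ⟨C, hC⟩ := hbdd
  have hbound (h : ℝ) (hh : 0 < h) : |κ| * h ^ n ≤ 2 ^ n * C := by
    obtain ⟨ξ, -, hξ⟩ := exists_abs_iteratedDeriv_mul_pow_le hf hC hh 0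
    rwa [hconst] at hξ
  by_contra hκ
  have hlim : Tendsto (fun h : ℝ => |κ| * h ^ n) atTop atTop :=
    (tendsto_pow_atTop hn).const_mul_atTop (abs_pos.2 hκ)
  obtain ⟨h, hh, hlt⟩ := ((eventually_gt_atTop 0).and
    (hlim.eventually_gt_atTop (2 ^ n * C))).exists
  exact hlt.not_ge (hbound h hh)

theorem eq_of_bounded_of_iteratedDeriv_const (hf : ContDiff ℝ n f) (hbdd : ∃ C, ∀ t, |f t| ≤ C)
    (hconst : ∀ x y, iteratedDeriv n f x = iteratedDeriv n f y) (x y : ℝ) : f x = f y := by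
  induction n with
  | zero => simpa using hconst x y
  | succ n ih =>
    have hzero : iteratedDeriv (n + 1) f 0 = 0 :=
      iteratedDeriv_eq_zero_of_bounded_of_const hf n.succ_ne_zero hbdd fun x => hconst x 0
    have hderiv (x : ℝ) := hasDerivAt_iteratedDeriv_of_contDiff hf n.lt_succ_self x
    refine ih (hf.of_le (mod_cast n.le_succ)) (is_const_of_deriv_eq_zero
      (fun x => (hderiv x).differentiableAt) fun x => ?_)
    rw [(hderiv x).deriv, hconst x 0, hzero]

end BoundedDerivatives

section Comparison

/-- `StaysAbove q Φ G`: a value of `G` above `Φ y` forces `G` to stay above the curve `Φ` traced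
from `y` to the right, as long as the curve is traced inside `[0, q]`. -/
def StaysAbove (q : ℝ) (Φ G : ℝ → ℝ) : Prop :=
  ∀ ⦃x y t : ℝ⦄, 0 ≤ y → 0 ≤ t → y + t ≤ q → Φ y < G x → Φ (y + t) ≤ G (x + t)

/-- `Φ` on `[0, q]` is a comparison curve for `F` in the sense of Kolmogorov: neither `F` nor `-F`
falls from a common level faster than `Φ`, in either direction. The signs `ε`, `δ` run over
`{1, -1}`. -/
def IsComparisonCurve (q : ℝ) (Φ F : ℝ → ℝ) : Prop :=
  ∀ ⦃ε δ : ℝ⦄, |ε| = 1 → |δ| = 1 → StaysAbove q Φ fun s => ε * F (δ * s)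

theorem exists_pos_of_hasDerivAt_neg {D D' : ℝ → ℝ} (hD : ∀ t, HasDerivAt D (D' t) t) {T : ℝ}
    (hT : 0 ≤ T) (h0 : 0 < D 0) (hDT : D T < 0) : ∃ t ∈ Set.Ioo 0 T, 0 < D t ∧ D' t < 0 := by
  have hcont : Continuous D := continuous_iff_continuousAt.2 fun t => (hD t).continuousAt
  set S := Set.Icc 0 T ∩ {t | D t ≤ 0}
  have hclosed : IsClosed S := isClosed_Icc.inter (isClosed_le hcont continuous_const)
  have hbdd : BddBelow S := ⟨0, fun t ht => ht.1.1⟩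
  obtain ⟨⟨hs0, hsT⟩, hDs⟩ : sInf S ∈ S := hclosed.csInf_mem ⟨T, ⟨hT, le_rfl⟩, hDT.le⟩ hbdd
  have hs_pos : 0 < sInf S := hs0.lt_of_ne fun h => (h ▸ hDs : D 0 ≤ 0).not_gt h0
  obtain ⟨t, ⟨ht0, hts⟩, hslope⟩ :=
    exists_hasDerivAt_eq_slope D D' hs_pos hcont.continuousOn fun x _ => hD x
  refine ⟨t, ⟨ht0, hts.trans_le hsT⟩, ?_, ?_⟩
  · by_contra hDt
    exact (csInf_le hbdd ⟨⟨ht0.le, (hts.trans_le hsT).le⟩, not_lt.1 hDt⟩).not_gt hts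
  · rw [hslope]
    exact div_neg_of_neg_of_pos (by linarith [show D (sInf S) ≤ 0 from hDs]) (by linarith)

theorem le_of_hasDerivAt_nonneg {H H' : ℝ → ℝ} (hH : ∀ t, HasDerivAt H (H' t) t) {T : ℝ}
    (hT : 0 ≤ T) (hnonneg : ∀ t ∈ Set.Icc 0 T, 0 ≤ H' t) : H 0 ≤ H T :=
  monotoneOn_of_hasDerivWithinAt_nonneg (convex_Icc 0 T)
    (fun t _ => (hH t).continuousAt.continuousWithinAt) (fun t _ => (hH t).hasDerivWithinAt)
    (fun t ht => hnonneg t (interior_subset ht)) ⟨le_rfl, hT⟩ ⟨hT, le_rfl⟩ hT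

variable {q : ℝ} {Φ Ψ F G u v : ℝ → ℝ}

/- Where `G` first starts falling faster than `Ψ` its slope is already below that of `Ψ`, and
tracing `Ψ` back to its maximum from there, `G` would overshoot `Ψ 0`. -/
theorem StaysAbove.of_hasDerivAt (hG : ∀ x, HasDerivAt G (v x) x)
    (hΨ : ∀ y, HasDerivAt Ψ (-Φ (q - y)) y) (hv : StaysAbove q Φ fun s => -v (-s))
    (hle : ∀ x, G x ≤ Ψ 0) : StaysAbove q Ψ G := by
  intro x y t hy ht hyt hx
  by_contra! hcross
  obtain ⟨s, ⟨hs0, hst⟩, habove, hsteep⟩ := exists_pos_of_hasDerivAt_neg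
    (D := fun t => G (x + t) - Ψ (y + t)) (D' := fun t => v (x + t) - -Φ (q - (y + t)))
    (fun t => ((hG (x + t)).comp_const_add x t).sub ((hΨ (y + t)).comp_const_add y t)) ht
    (by simpa using hx) (sub_neg.2 hcross)
  have hback : G (x + s - 0) - Ψ (y + s - 0) ≤ G (x + s - (y + s)) - Ψ (y + s - (y + s)) := by
    refine le_of_hasDerivAt_nonneg (H := fun τ => G (x + s - τ) - Ψ (y + s - τ))
      (fun τ => ((hG (x + s - τ)).comp_const_sub (x + s) τ).sub
        ((hΨ (y + s - τ)).comp_const_sub (y + s) τ)) (by linarith) ?_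
    rintro τ ⟨hτ0, hτ⟩
    have hfollow : Φ (q - (y + s) + τ) ≤ -v (-(-(x + s) + τ)) :=
      hv (by linarith) hτ0 (by linarith) (by simp only [neg_neg]; linarith)
    rw [show -(-(x + s) + τ) = x + s - τ by ring] at hfollow
    rw [show q - (y + s - τ) = q - (y + s) + τ by ring]
    linarith
  simp only [sub_zero, sub_self] at hback
  linarith [hle (x + s - (y + s))]

theorem IsComparisonCurve.of_hasDerivAt (hu : IsComparisonCurve q Φ u)
    (hF : ∀ x, HasDerivAt F (u x) x) (hΨ : ∀ y, HasDerivAt Ψ (-Φ (q - y)) y)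
    (hle : ∀ x, |F x| ≤ Ψ 0) : IsComparisonCurve q Ψ F := by
  intro ε δ hε hδ
  have hderiv (s : ℝ) : HasDerivAt (fun s => ε * F (δ * s)) (ε * (δ * u (δ * s))) s := by
    have hmul : HasDerivAt (fun s : ℝ => δ * s) δ s := by simpa using (hasDerivAt_id s).const_mul δ
    simpa only [Function.comp_def, mul_comm] using ((hF (δ * s)).comp s hmul).const_mul ε
  refine StaysAbove.of_hasDerivAt hderiv hΨ ?_ fun x => ?_
  · have hflip : (fun s => -(ε * (δ * u (δ * -s)))) = fun s => -(ε * δ) * u (-δ * s) := by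
      funext s
      rw [mul_neg, neg_mul δ s]
      ring
    rw [hflip]
    exact hu (by rw [abs_neg, abs_mul, hε, hδ, one_mul]) (by rwa [abs_neg])
  · calc ε * F (δ * x) ≤ |ε * F (δ * x)| := le_abs_self _
      _ = |F (δ * x)| := by rw [abs_mul, hε, one_mul]
      _ ≤ Ψ 0 := hle _

theorem isComparisonCurve_linear {α : ℝ} (hu : ∀ x y, |u x - u y| ≤ α * |x - y|) (q b : ℝ) :
    IsComparisonCurve q (fun y => α * (b - y)) u := by
  intro ε δ hε hδ x y t _ ht _ hx
  have hdrop : ε * u (δ * x) - ε * u (δ * (x + t)) ≤ α * t :=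
    calc ε * u (δ * x) - ε * u (δ * (x + t)) ≤ |ε * (u (δ * x) - u (δ * (x + t)))| := by
          rw [← mul_sub]; exact le_abs_self _
      _ ≤ α * |δ * x - δ * (x + t)| := by rw [abs_mul, hε, one_mul]; exact hu _ _
      _ = α * t := by
          rw [← mul_sub, abs_mul, hδ, one_mul, sub_add_cancel_left, abs_neg, abs_of_nonneg ht]
  linarith

theorem IsComparisonCurve.insert_plateau (hF : IsComparisonCurve q Φ F) (hle : ∀ x, |F x| ≤ Φ 0)
    (c : ℝ) : IsComparisonCurve (q + c) (fun y => Φ (max (y - c) 0)) F := by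
  intro ε δ hε hδ x y t _ ht hyt hx
  have hcy : c ≤ y := by
    by_contra! hyc
    have habs : ε * F (δ * x) ≤ |F (δ * x)| := by
      simpa only [abs_mul, hε, one_mul] using le_abs_self (ε * F (δ * x))
    simp only [max_eq_right (sub_neg.2 hyc).le] at hx
    exact (habs.trans (hle _)).not_gt hx
  simp only [max_eq_left (sub_nonneg.2 hcy)] at hx
  simp only [add_sub_right_comm y t c, max_eq_left (show 0 ≤ y - c + t by linarith)]
  exact hF hε hδ (by linarith) ht (by linarith) hx

/- Around `x` the derivative `u` stays above `Φ` in both directions, so `F` rises by at least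
`2 * (Ψ 0 - Ψ (q - y))` across `[x - (q - y), x + (q - y)]`. -/
theorem IsComparisonCurve.sub_le_unif (hu : IsComparisonCurve q Φ u)
    (hF : ∀ x, HasDerivAt F (u x) x) (hΨ : ∀ y, HasDerivAt Ψ (-Φ (q - y)) y)
    (hbdd : ∃ C, ∀ t, |F t| ≤ C) {x y : ℝ} (hy : 0 ≤ y) (hyq : y ≤ q) (hx : Φ y < |u x|) :
    Ψ 0 - Ψ (q - y) ≤ unif F := by
  obtain ⟨ε, hε, hεu⟩ : ∃ ε : ℝ, |ε| = 1 ∧ |u x| = ε * u x := by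
    rcases abs_choice (u x) with h | h
    · exact ⟨1, abs_one, by rw [h, one_mul]⟩
    · exact ⟨-1, by rw [abs_neg, abs_one], by rw [h, neg_one_mul]⟩
  rw [hεu] at hx
  have hrise := le_of_hasDerivAt_nonneg
    (H := fun t => ε * F (x + t) - ε * F (x - t) - 2 * Ψ (q - y - t))
    (fun t => ((((hF (x + t)).comp_const_add x t).const_mul ε).sub
      (((hF (x - t)).comp_const_sub x t).const_mul ε)).sub
      (((hΨ (q - y - t)).comp_const_sub (q - y) t).const_mul 2)) (sub_nonneg.2 hyq) (by
    rintro t ⟨ht0, ht⟩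
    have hright : Φ (y + t) ≤ ε * u (1 * (x + t)) :=
      hu hε abs_one hy ht0 (by linarith) (by simpa only [one_mul] using hx)
    have hleft : Φ (y + t) ≤ ε * u (-1 * (-x + t)) :=
      hu hε (by rw [abs_neg, abs_one]) hy ht0 (by linarith)
        (by simpa only [neg_one_mul, neg_neg] using hx)
    rw [one_mul] at hright
    rw [show -1 * (-x + t) = x - t by ring] at hleft
    rw [show q - (q - y - t) = y + t by ring]
    linarith)
  have habs (z : ℝ) : |ε * F z| ≤ unif F := by
    rw [abs_mul, hε, one_mul]
    exact abs_le_unif hbdd z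
  simp only [sub_zero, add_zero, sub_self] at hrise
  linarith [(abs_le.1 (habs (x + (q - y)))).2, (abs_le.1 (habs (x - (q - y)))).1]

theorem IsComparisonCurve.apply_zero_le_unif (hu : IsComparisonCurve q Φ u) (hq : 0 < q)
    (hF : ∀ x, HasDerivAt F (u x) x) (hΨ : ∀ y, HasDerivAt Ψ (-Φ (q - y)) y) (hΨq : Ψ q = 0)
    (hbdd : ∃ C, ∀ t, |F t| ≤ C) (hnorm : unif u = Φ 0)
    (hlt : ∀ y ∈ Set.Ioc 0 q, Φ y < Φ 0) : Ψ 0 ≤ unif F := by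
  have hcont : Continuous Ψ := continuous_iff_continuousAt.2 fun y => (hΨ y).continuousAt
  have hlim : Tendsto (fun y => Ψ 0 - Ψ (q - y)) (nhdsWithin 0 (Set.Ioi 0)) (nhds (Ψ 0)) := by
    have hcont' : Continuous fun y => Ψ 0 - Ψ (q - y) := by fun_prop
    simpa [hΨq] using (hcont'.tendsto 0).mono_left nhdsWithin_le_nhds
  refine le_of_tendsto hlim ?_
  filter_upwards [Ioc_mem_nhdsGT hq] with y hy
  obtain ⟨x, hx⟩ : ∃ x, Φ y < |u x| := exists_lt_of_lt_ciSup (hnorm ▸ hlt y hy : Φ y < unif u)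
  exact hu.sub_le_unif hF hΨ hbdd hy.1.le hy.2 hx

end Comparison

section QuarterWave

/-- The decreasing quarter wave of `±ψ_{i+2}(0,b,c)`, parametrized so that the maximum is at `0` and
the zero at `b + c`. -/
noncomputable def quarterWave (b : ℝ) : ℕ → ℝ → ℝ → ℝ
  | 0 => fun c y => b ^ 2 / 2 - max (y - c) 0 ^ 2 / 2
  | i + 1 => fun c y => ∫ s in 0..(b + c - y), quarterWave b i c s

variable {b c c' y : ℝ} {i : ℕ}

theorem continuous_uncurry_quarterWave (b : ℝ) (i : ℕ) :
    Continuous (Function.uncurry (quarterWave b i)) := by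
  induction i with
  | zero => simp only [quarterWave, Function.uncurry_def]; fun_prop
  | succ i ih =>
    refine intervalIntegral.continuous_parametric_intervalIntegral_of_continuous
      (f := fun (p : ℝ × ℝ) s => quarterWave b i p.1 s) ?_ (by fun_prop)
    exact ih.comp (continuous_fst.fst.prodMk continuous_snd)

theorem continuous_quarterWave (b : ℝ) (i : ℕ) (c : ℝ) : Continuous (quarterWave b i c) :=
  (continuous_uncurry_quarterWave b i).comp (Continuous.prodMk_right c)

theorem intervalIntegrable_quarterWave (b : ℝ) (i : ℕ) (c s t : ℝ) :
    IntervalIntegrable (quarterWave b i c) volume s t :=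
  (continuous_quarterWave b i c).intervalIntegrable s t

theorem hasDerivAt_quarterWave_succ (b : ℝ) (i : ℕ) (c y : ℝ) :
    HasDerivAt (quarterWave b (i + 1) c) (-quarterWave b i c (b + c - y)) y :=
  ((continuous_quarterWave b i c).integral_hasStrictDerivAt 0 (b + c - y)).hasDerivAt.comp_const_sub
    (b + c) y

theorem quarterWave_add_eq_zero (hb : 0 ≤ b) (i : ℕ) (c : ℝ) : quarterWave b i c (b + c) = 0 := by
  cases i with
  | zero => simp [quarterWave, max_eq_left hb]
  | succ i => simp [quarterWave]

theorem quarterWave_zero_of_le (b : ℝ) (hy : y ≤ c) : quarterWave b 0 c y = b ^ 2 / 2 := by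
  simp [quarterWave, max_eq_right (sub_nonpos.2 hy)]

theorem quarterWave_pos (hb : 0 < b) (i : ℕ) (hy : y ∈ Set.Ico 0 (b + c)) :
    0 < quarterWave b i c y := by
  induction i generalizing y with
  | zero =>
    have hlt : max (y - c) 0 < b := max_lt (by linarith [hy.2]) hb
    have hsq : max (y - c) 0 ^ 2 < b ^ 2 := pow_lt_pow_left₀ hlt (le_max_right _ _) two_ne_zero
    simp only [quarterWave]
    linarith
  | succ i ih =>
    refine intervalIntegral.intervalIntegral_pos_of_pos_on
      (intervalIntegrable_quarterWave b i c _ _) (fun s hs => ih ⟨hs.1.le, ?_⟩) (sub_pos.2 hy.2)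
    linarith [hs.2, hy.1]

theorem quarterWave_nonneg (hb : 0 < b) (i : ℕ) (hy : y ∈ Set.Icc 0 (b + c)) :
    0 ≤ quarterWave b i c y := by
  rcases hy.2.lt_or_eq with hlt | rfl
  · exact (quarterWave_pos hb i ⟨hy.1, hlt⟩).le
  · exact (quarterWave_add_eq_zero hb.le i c).ge

theorem strictAntiOn_quarterWave_succ (hb : 0 < b) (i : ℕ) (c : ℝ) :
    StrictAntiOn (quarterWave b (i + 1) c) (Set.Icc 0 (b + c)) := by
  refine strictAntiOn_of_deriv_neg (convex_Icc _ _) (continuous_quarterWave b _ c).continuousOn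
    fun y hy => ?_
  rw [interior_Icc] at hy
  rw [(hasDerivAt_quarterWave_succ b i c y).deriv, neg_lt_zero]
  exact quarterWave_pos hb i ⟨by linarith [hy.2], by linarith [hy.1]⟩

theorem quarterWave_lt_apply_zero_of_plateau_zero (b : ℝ) (hy : 0 < y) :
    quarterWave b 0 0 y < quarterWave b 0 0 0 := by
  simp only [quarterWave, sub_zero, max_eq_left hy.le, max_self]
  nlinarith

theorem quarterWave_succ_lt_apply_zero (hb : 0 < b) (i : ℕ) (hy : y ∈ Set.Ioc 0 (b + c)) :
    quarterWave b (i + 1) c y < quarterWave b (i + 1) c 0 :=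
  strictAntiOn_quarterWave_succ hb i c ⟨le_rfl, hy.1.le.trans hy.2⟩ ⟨hy.1.le, hy.2⟩ hy.1

theorem quarterWave_le_apply_zero (hb : 0 < b) (i : ℕ) (hc : 0 ≤ c) (hy : y ∈ Set.Icc 0 (b + c)) :
    quarterWave b i c y ≤ quarterWave b i c 0 := by
  cases i with
  | zero =>
    rw [quarterWave_zero_of_le b hc]
    exact sub_le_self _ (by positivity)
  | succ i =>
    exact (strictAntiOn_quarterWave_succ hb i c).antitoneOn ⟨le_rfl, hy.1.trans hy.2⟩ hy hy.1

theorem quarterWave_mono_plateau (hb : 0 < b) (i : ℕ) (hcc' : c ≤ c') (hy : y ∈ Set.Icc 0 (b + c)) :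
    quarterWave b i c y ≤ quarterWave b i c' y := by
  induction i generalizing y with
  | zero => simp only [quarterWave]; gcongr
  | succ i ih =>
    have hend : 0 ≤ b + c - y := sub_nonneg.2 hy.2
    calc quarterWave b (i + 1) c y = ∫ s in 0..(b + c - y), quarterWave b i c s := rfl
      _ ≤ ∫ s in 0..(b + c - y), quarterWave b i c' s :=
          intervalIntegral.integral_mono_on hend (intervalIntegrable_quarterWave b i c _ _)
            (intervalIntegrable_quarterWave b i c' _ _)
            fun s hs => ih ⟨hs.1, by linarith [hs.2, hy.1]⟩
      _ ≤ ∫ s in 0..(b + c' - y), quarterWave b i c' s :=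
          intervalIntegral.integral_mono_interval le_rfl hend (by linarith)
            (ae_restrict_of_forall_mem measurableSet_Ioc fun s hs =>
              quarterWave_nonneg hb i ⟨hs.1.le, by linarith [hs.2, hy.1]⟩)
            (intervalIntegrable_quarterWave b i c' _ _)

theorem apply_zero_le_quarterWave_of_le_plateau (hb : 0 < b) (i : ℕ) (hy : y ∈ Set.Icc 0 c) :
    quarterWave b i 0 0 ≤ quarterWave b i c y := by
  cases i with
  | zero => rw [quarterWave_zero_of_le b le_rfl, quarterWave_zero_of_le b hy.2]
  | succ i =>
    have hc : 0 ≤ c := hy.1.trans hy.2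
    calc quarterWave b (i + 1) 0 0 = ∫ s in 0..b, quarterWave b i 0 s := by simp [quarterWave]
      _ ≤ ∫ s in 0..b, quarterWave b i c s :=
          intervalIntegral.integral_mono_on hb.le (intervalIntegrable_quarterWave b i 0 _ _)
            (intervalIntegrable_quarterWave b i c _ _)
            fun s hs => quarterWave_mono_plateau hb i hc ⟨hs.1, by linarith [hs.2]⟩
      _ ≤ ∫ s in 0..(b + c - y), quarterWave b i c s :=
          intervalIntegral.integral_mono_interval le_rfl hb.le (by linarith [hy.2])
            (ae_restrict_of_forall_mem measurableSet_Ioc fun s hs =>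
              quarterWave_nonneg hb i ⟨hs.1.le, by linarith [hs.2, hy.1]⟩)
            (intervalIntegrable_quarterWave b i c _ _)

theorem mul_apply_zero_le_quarterWave_succ (hb : 0 < b) (i : ℕ) (hc : 0 ≤ c) :
    c * quarterWave b i 0 0 ≤ quarterWave b (i + 1) c 0 :=
  calc c * quarterWave b i 0 0 = ∫ _ in 0..c, quarterWave b i 0 0 := by simp
    _ ≤ ∫ s in 0..c, quarterWave b i c s :=
        intervalIntegral.integral_mono_on hc intervalIntegrable_const
          (intervalIntegrable_quarterWave b i c _ _)
          fun s hs => apply_zero_le_quarterWave_of_le_plateau hb i hs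
    _ ≤ ∫ s in 0..(b + c - 0), quarterWave b i c s :=
        intervalIntegral.integral_mono_interval le_rfl hc (by linarith)
          (ae_restrict_of_forall_mem measurableSet_Ioc fun s hs =>
            quarterWave_nonneg hb i ⟨hs.1.le, by linarith [hs.2]⟩)
          (intervalIntegrable_quarterWave b i c _ _)

theorem exists_quarterWave_succ_apply_zero_eq (hb : 0 < b) (i : ℕ) (hc : 0 ≤ c) {L : ℝ}
    (hL : quarterWave b (i + 1) c 0 ≤ L) : ∃ c' ≥ c, quarterWave b (i + 1) c' 0 = L := by
  have hpos : 0 < quarterWave b i 0 0 := quarterWave_pos hb i ⟨le_rfl, by simpa using hb⟩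
  have hcont : Continuous fun c => quarterWave b (i + 1) c 0 :=
    (continuous_uncurry_quarterWave b (i + 1)).comp (Continuous.prodMk_left 0)
  set C := max c (L / quarterWave b i 0 0)
  have hLC : L ≤ quarterWave b (i + 1) C 0 :=
    ((div_le_iff₀ hpos).1 (le_max_right c _)).trans
      (mul_apply_zero_le_quarterWave_succ hb i (hc.trans (le_max_left c _)))
  obtain ⟨c', hc', hval⟩ :=
    intermediate_value_Icc (le_max_left c _) hcont.continuousOn ⟨hL, hLC⟩
  exact ⟨c', hc'.1, hval⟩

end QuarterWave

section Matching

/-- The wave `α * ψ_{i+2}(0,b,c)` has the same uniform norm as `u` and, with the plateau `c` kept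
or lengthened, is a comparison function for `u`. -/
structure IsMatched (α b : ℝ) (i : ℕ) (c : ℝ) (u : ℝ → ℝ) : Prop where
  nonneg : 0 ≤ c
  unif_eq : unif u = α * quarterWave b i c 0
  isComparisonCurve : ∀ c' ≥ c, IsComparisonCurve (b + c') (fun y => α * quarterWave b i c' y) u
  lt_apply_zero : ∀ y ∈ Set.Ioc 0 (b + c), quarterWave b i c y < quarterWave b i c 0

variable {α b c : ℝ} {i : ℕ} {u F f : ℝ → ℝ}

theorem isMatched_zero_of_hasDerivAt (hu : ∀ x y, |u x - u y| ≤ α * |x - y|)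
    (hF : ∀ x, HasDerivAt F (u x) x) (hbdd : ∃ C, ∀ t, |F t| ≤ C)
    (hnorm : unif F = α * (b ^ 2 / 2)) : IsMatched α b 0 0 F := by
  have hparabola (y : ℝ) :
      HasDerivAt (fun y => α * (b ^ 2 / 2 - y ^ 2 / 2)) (-(α * (b - (b - y)))) y := by
    refine ((((hasDerivAt_pow 2 y).div_const 2).const_sub (b ^ 2 / 2)).const_mul α).congr_deriv ?_
    simp only [Nat.cast_ofNat, Nat.add_one_sub_one, pow_one]
    ring
  have hle (x : ℝ) : |F x| ≤ α * (b ^ 2 / 2 - 0 ^ 2 / 2) := by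
    simpa only [hnorm, ne_eq, OfNat.ofNat_ne_zero, not_false_eq_true, zero_pow, zero_div,
      sub_zero] using abs_le_unif hbdd x
  have hcurve := (isComparisonCurve_linear hu b b).of_hasDerivAt hF hparabola hle
  exact
    { nonneg := le_rfl
      unif_eq := by rw [hnorm, quarterWave_zero_of_le b le_rfl]
      isComparisonCurve := fun c' _ => hcurve.insert_plateau hle c'
      lt_apply_zero := fun y hy => quarterWave_lt_apply_zero_of_plateau_zero b hy.1 }

theorem IsMatched.exists_of_hasDerivAt (hu : IsMatched α b i c u) (hα : 0 < α) (hb : 0 < b)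
    (hF : ∀ x, HasDerivAt F (u x) x) (hbdd : ∃ C, ∀ t, |F t| ≤ C) :
    ∃ c' ≥ c, IsMatched α b (i + 1) c' F := by
  have hwave (c' y : ℝ) : HasDerivAt (fun y => α * quarterWave b (i + 1) c' y)
      (-(α * quarterWave b i c' (b + c' - y))) y := by
    simpa only [mul_neg] using (hasDerivAt_quarterWave_succ b i c' y).const_mul α
  have hlower : α * quarterWave b (i + 1) c 0 ≤ unif F :=
    (hu.isComparisonCurve c le_rfl).apply_zero_le_unif (add_pos_of_pos_of_nonneg hb hu.nonneg) hF
      (hwave c) (by rw [quarterWave_add_eq_zero hb.le, mul_zero]) hbdd hu.unif_eq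
      fun y hy => mul_lt_mul_of_pos_left (hu.lt_apply_zero y hy) hα
  obtain ⟨c', hcc', hc'⟩ := exists_quarterWave_succ_apply_zero_eq hb i hu.nonneg
    ((le_div_iff₀' hα).2 hlower)
  have hnorm : unif F = α * quarterWave b (i + 1) c' 0 := by rw [hc', mul_div_cancel₀ _ hα.ne']
  have hc'_nonneg : 0 ≤ c' := hu.nonneg.trans hcc'
  refine ⟨c', hcc', hc'_nonneg, hnorm, fun c'' hc'' => ?_, fun y hy =>
    quarterWave_succ_lt_apply_zero hb i hy⟩
  refine (hu.isComparisonCurve c'' (hcc'.trans hc'')).of_hasDerivAt hF (hwave c'') fun x => ?_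
  calc |F x| ≤ α * quarterWave b (i + 1) c' 0 := hnorm ▸ abs_le_unif hbdd x
    _ ≤ α * quarterWave b (i + 1) c'' 0 := mul_le_mul_of_nonneg_left
        (quarterWave_mono_plateau hb (i + 1) hc'' ⟨le_rfl, by linarith⟩) hα.le

variable {n j : ℕ}

theorem MemL.exists_abs_iteratedDeriv_le (hf : MemL (n + 1) f) (hj : j ≤ n) :
    ∃ C, ∀ t, |iteratedDeriv j f t| ≤ C := by
  obtain ⟨-, hbdd, hdiff, K, hlip⟩ := hf
  exact exists_abs_iteratedDeriv_le_of_lipschitzWith_of_le hdiff hbdd hlip hj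

theorem MemL.abs_iteratedDeriv_sub_le (hf : MemL (n + 1) f) (x y : ℝ) :
    |iteratedDeriv n f x - iteratedDeriv n f y| ≤ M (n + 1) f * |x - y| := by
  obtain ⟨-, -, -, K, hlip⟩ := hf
  rw [M, iteratedDeriv_succ]
  exact abs_sub_le_unif_deriv_mul hlip x y

theorem MemL.M_pos (hf : MemL (n + 1) f) (hnc : ∃ x y, f x ≠ f y) (hj : j ≤ n) : 0 < M j f := by
  obtain ⟨x, y, hxy⟩ := hnc
  have hnonneg : 0 ≤ M j f := Real.iSup_nonneg fun t => abs_nonneg _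
  refine hnonneg.lt_of_ne' fun hzero => hxy ?_
  have hderiv (t : ℝ) : iteratedDeriv j f t = 0 := abs_eq_zero.1 (le_antisymm
    ((abs_le_unif (hf.exists_abs_iteratedDeriv_le hj) t).trans_eq hzero) (abs_nonneg _))
  exact eq_of_bounded_of_iteratedDeriv_const (hf.2.2.1.of_le (mod_cast hj)) hf.2.1
    (fun s t => by rw [hderiv, hderiv]) x y

theorem MemL.M_succ_pos (hf : MemL (n + 1) f) (hnc : ∃ x y, f x ≠ f y) : 0 < M (n + 1) f := by
  obtain ⟨x, y, hxy⟩ := hnc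
  have hnonneg : 0 ≤ M (n + 1) f := Real.iSup_nonneg fun t => abs_nonneg _
  refine hnonneg.lt_of_ne' fun hzero => hxy ?_
  refine eq_of_bounded_of_iteratedDeriv_const hf.2.2.1 hf.2.1 (fun s t => ?_) x y
  simpa [hzero, sub_eq_zero] using hf.abs_iteratedDeriv_sub_le s t

theorem MemL.exists_isMatched (hf : MemL (n + 2) f) (hnc : ∃ x y, f x ≠ f y) :
    ∃ b > 0, IsMatched (M (n + 2) f) b 0 0 (iteratedDeriv n f) := by
  have hα : 0 < M (n + 2) f := hf.M_succ_pos hnc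
  have hratio : 0 < 2 * M n f / M (n + 2) f :=
    div_pos (mul_pos two_pos (hf.M_pos hnc n.le_succ)) hα
  refine ⟨√(2 * M n f / M (n + 2) f), Real.sqrt_pos.2 hratio,
    isMatched_zero_of_hasDerivAt hf.abs_iteratedDeriv_sub_le
      (hasDerivAt_iteratedDeriv_of_contDiff hf.2.2.1 n.lt_succ_self)
      (hf.exists_abs_iteratedDeriv_le n.le_succ) ?_⟩
  rw [Real.sq_sqrt hratio.le, ← M]
  field_simp

theorem IsMatched.exists_iteratedDeriv {l : ℕ} (h : IsMatched α b i c (iteratedDeriv (j + l) f))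
    (hα : 0 < α) (hb : 0 < b) (hf : MemL (n + 1) f) (hn : j + l ≤ n) :
    ∃ c' ≥ c, IsMatched α b (i + l) c' (iteratedDeriv j f) := by
  induction l generalizing i c with
  | zero => exact ⟨c, le_rfl, h⟩
  | succ l ih =>
    have hln : j + l < n := hn
    obtain ⟨c₁, hc₁, h₁⟩ := h.exists_of_hasDerivAt hα hb
      (hasDerivAt_iteratedDeriv_of_contDiff hf.2.2.1 hln) (hf.exists_abs_iteratedDeriv_le hln.le)
    obtain ⟨c₂, hc₂, h₂⟩ := ih h₁ hln.le
    exact ⟨c₂, hc₁.trans hc₂, by rwa [Nat.add_right_comm] at h₂⟩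

end Matching

section AntiperiodicPrimitive

variable {g : ℝ → ℝ} {T : ℝ}

theorem integral_add_of_antiperiodic (hg : Function.Antiperiodic g T)
    (hint : ∀ s t, IntervalIntegrable g volume s t) (t : ℝ) :
    ∫ x in 0..(t + T), g x = (∫ x in 0..T, g x) - ∫ x in 0..t, g x := by
  have hshift : ∫ x in T..(t + T), g x = -∫ x in 0..t, g x := by
    have hcomp := intervalIntegral.integral_comp_add_right (a := 0) (b := t) g T
    simpa only [hg _, intervalIntegral.integral_neg, zero_add] using hcomp.symm
  rw [← intervalIntegral.integral_add_adjacent_intervals (hint 0 T) (hint T (t + T)), hshift,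
    sub_eq_add_neg]

theorem integral_integral_of_antiperiodic (hg : Function.Antiperiodic g T)
    (hint : ∀ s t, IntervalIntegrable g volume s t) :
    ∫ x in 0..(2 * T), ∫ s in 0..x, g s = T * ∫ s in 0..T, g s := by
  have hprim (s t : ℝ) : IntervalIntegrable (fun x => ∫ u in 0..x, g u) volume s t :=
    (intervalIntegral.continuous_primitive hint 0).intervalIntegrable s t
  have hsecond : ∫ x in T..(2 * T), ∫ s in 0..x, g s =
      T * (∫ s in 0..T, g s) - ∫ x in 0..T, ∫ s in 0..x, g s := by
    have hshift := intervalIntegral.integral_comp_add_right (a := 0) (b := T)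
      (fun x => ∫ s in 0..x, g s) T
    rw [zero_add, ← two_mul] at hshift
    simp only [← hshift, integral_add_of_antiperiodic hg hint]
    rw [intervalIntegral.integral_sub intervalIntegrable_const (hprim 0 T),
      intervalIntegral.integral_const, sub_zero, smul_eq_mul]
  rw [← intervalIntegral.integral_add_adjacent_intervals (hprim 0 T) (hprim T (2 * T)), hsecond,
    add_sub_cancel]

end AntiperiodicPrimitive

section PsiZero

variable {a b c t : ℝ}

theorem abs_psiZero_le_one (a b c t : ℝ) : |psiZero a b c t| ≤ 1 := by
  have hbase (s : ℝ) : |psiBase a b s| ≤ 1 := by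
    unfold psiBase; split_ifs <;> simp
  have hhalf (s : ℝ) : |psiHalf a b c s| ≤ 1 := by
    unfold psiHalf; split_ifs <;> exact hbase _
  unfold psiZero
  split_ifs
  · exact hhalf _
  · rw [abs_neg]
    exact hhalf _

theorem measurable_psiZero (a b c : ℝ) : Measurable (psiZero a b c) := by
  have hbase : Measurable (psiBase a b) :=
    Measurable.ite measurableSet_Iic measurable_const
      (Measurable.ite measurableSet_Iic measurable_const measurable_const)
  have hhalf : Measurable (psiHalf a b c) :=
    Measurable.ite measurableSet_Iic hbase (hbase.comp (measurable_const.sub measurable_id))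
  have hmod : Measurable fun t : ℝ =>
      t - 4 * (a + b + c) * (⌊t / (4 * (a + b + c))⌋ : ℝ) := by fun_prop
  exact Measurable.ite (measurableSet_le hmod measurable_const) (hhalf.comp hmod)
    (hhalf.comp (measurable_const.sub hmod)).neg

theorem intervalIntegrable_psiZero (a b c s t : ℝ) :
    IntervalIntegrable (psiZero a b c) volume s t :=
  (intervalIntegrable_const (c := (1 : ℝ))).mono_fun (measurable_psiZero a b c).aestronglyMeasurable
    (ae_of_all _ fun x => by simpa using abs_psiZero_le_one a b c x)

theorem psiHalf_two_mul_sub (a b c t : ℝ) :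
    psiHalf a b c (2 * (a + b + c) - t) = psiHalf a b c t := by
  rcases lt_trichotomy t (a + b + c) with h | rfl | h
  · simp only [psiHalf, h.le, if_true, sub_sub_cancel]
    rw [if_neg (by linarith)]
  · ring_nf
  · simp only [psiHalf, h.not_ge, if_false]
    rw [if_pos (by linarith)]

theorem psiZero_of_mem_Icc (hq : 0 < a + b + c) (ht : t ∈ Set.Icc 0 (2 * (a + b + c))) :
    psiZero a b c t = psiHalf a b c t := by
  have hfloor : ⌊t / (4 * (a + b + c))⌋ = 0 :=
    Int.floor_eq_zero_iff.2 ⟨by have := ht.1; positivity,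
      (div_lt_one (by positivity)).2 (by linarith [ht.2])⟩
  simp [psiZero, hfloor, ht.2]

theorem psiZero_of_mem_Ioo (ht : t ∈ Set.Ioo (2 * (a + b + c)) (4 * (a + b + c))) :
    psiZero a b c t = -psiHalf a b c (4 * (a + b + c) - t) := by
  have hq : 0 < a + b + c := by linarith [ht.1, ht.2]
  have hfloor : ⌊t / (4 * (a + b + c))⌋ = 0 :=
    Int.floor_eq_zero_iff.2 ⟨div_nonneg (by linarith [ht.1]) (by positivity),
      (div_lt_one (by positivity)).2 ht.2⟩
  simp [psiZero, hfloor, ht.1.not_ge]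

theorem periodic_psiZero (hq : 0 < a + b + c) :
    Function.Periodic (psiZero a b c) (4 * (a + b + c)) := by
  intro t
  have hfloor : ⌊(t + 4 * (a + b + c)) / (4 * (a + b + c))⌋ = ⌊t / (4 * (a + b + c))⌋ + 1 := by
    rw [add_div, div_self (by positivity), Int.floor_add_one]
  have hmod : t + 4 * (a + b + c) - 4 * (a + b + c) * (⌊t / (4 * (a + b + c))⌋ + 1) =
      t - 4 * (a + b + c) * ⌊t / (4 * (a + b + c))⌋ := by ring
  simp only [psiZero, hfloor, Int.cast_add, Int.cast_one, hmod]

theorem psiZero_two_mul_sub (hq : 0 < a + b + c) (ht : t ∈ Set.Icc 0 (2 * (a + b + c))) :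
    psiZero a b c (2 * (a + b + c) - t) = psiZero a b c t := by
  rw [psiZero_of_mem_Icc hq ht, psiZero_of_mem_Icc hq ⟨by linarith [ht.2], by linarith [ht.1]⟩,
    psiHalf_two_mul_sub]

theorem psiZero_add_of_mem_Ico (ha : 0 ≤ a) (ht : t ∈ Set.Ico 0 (2 * (a + b + c))) :
    psiZero a b c (t + 2 * (a + b + c)) = -psiZero a b c t := by
  have hq : 0 < a + b + c := by linarith [ht.1, ht.2]
  rcases ht.1.eq_or_lt with rfl | ht_pos
  · have hzero : psiZero a b c 0 = 0 := by
      rw [psiZero_of_mem_Icc hq ⟨le_rfl, by positivity⟩]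
      simp [psiHalf, psiBase, hq.le, ha]
    have hend := psiZero_two_mul_sub hq (t := 0) ⟨le_rfl, by positivity⟩
    rw [sub_zero] at hend
    rw [zero_add, hend, hzero, neg_zero]
  · have hreflect : 4 * (a + b + c) - (t + 2 * (a + b + c)) = 2 * (a + b + c) - t := by ring
    rw [psiZero_of_mem_Ioo ⟨by linarith, by linarith [ht.2]⟩, psiZero_of_mem_Icc hq ⟨ht.1, ht.2.le⟩,
      hreflect, psiHalf_two_mul_sub]

theorem antiperiodic_psiZero (ha : 0 ≤ a) (hq : 0 < a + b + c) :
    Function.Antiperiodic (psiZero a b c) (2 * (a + b + c)) := by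
  have hperiodic : Function.Periodic
      (fun t => psiZero a b c (t + 2 * (a + b + c)) + psiZero a b c t) (2 * (a + b + c)) := by
    intro t
    have hshift : t + 2 * (a + b + c) + 2 * (a + b + c) = t + 4 * (a + b + c) := by ring
    simp only [hshift, periodic_psiZero hq t]
    exact add_comm _ _
  intro t
  obtain ⟨s, hs, heq⟩ := hperiodic.exists_mem_Ico₀ (by positivity) t
  rw [eq_neg_iff_add_eq_zero]
  exact heq.trans (eq_neg_iff_add_eq_zero.1 (psiZero_add_of_mem_Ico ha hs))

end PsiZero

section Psi

variable {a b c t : ℝ}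

theorem intervalIntegrable_psi (m : ℕ) (a b c s t : ℝ) :
    IntervalIntegrable (psi m a b c) volume s t := by
  induction m generalizing s t with
  | zero => exact intervalIntegrable_psiZero a b c s t
  | succ m ih =>
    exact ((intervalIntegral.continuous_primitive ih 0).sub continuous_const).intervalIntegrable s t

theorem continuous_psi_succ (m : ℕ) (a b c : ℝ) : Continuous (psi (m + 1) a b c) :=
  (intervalIntegral.continuous_primitive (intervalIntegrable_psi m a b c) 0).sub continuous_const

theorem hasDerivAt_psi_succ_succ (m : ℕ) (a b c t : ℝ) :
    HasDerivAt (psi (m + 2) a b c) (psi (m + 1) a b c t) t :=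
  ((continuous_psi_succ m a b c).integral_hasStrictDerivAt 0 t).hasDerivAt.sub_const _

theorem psi_succ_sub_psi_succ (m : ℕ) (a b c s t : ℝ) :
    psi (m + 1) a b c t - psi (m + 1) a b c s = ∫ x in s..t, psi m a b c x := by
  simp only [psi, sub_sub_sub_cancel_right]
  exact intervalIntegral.integral_interval_sub_left (intervalIntegrable_psi m a b c 0 t)
    (intervalIntegrable_psi m a b c 0 s)

theorem psi_succ_eq_of_antiperiodic {m : ℕ} (hq : 0 < a + b + c)
    (hψ : Function.Antiperiodic (psi m a b c) (2 * (a + b + c))) (t : ℝ) :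
    psi (m + 1) a b c t =
      (∫ x in 0..t, psi m a b c x) - (∫ x in 0..(2 * (a + b + c)), psi m a b c x) / 2 := by
  have hmean := integral_integral_of_antiperiodic hψ (intervalIntegrable_psi m a b c)
  rw [← mul_assoc, show (2 : ℝ) * 2 = 4 by norm_num] at hmean
  simp only [psi, hmean]
  field_simp
  ring

theorem antiperiodic_psi (ha : 0 ≤ a) (hq : 0 < a + b + c) (m : ℕ) :
    Function.Antiperiodic (psi m a b c) (2 * (a + b + c)) := by
  induction m with
  | zero => exact antiperiodic_psiZero ha hq
  | succ m ih =>
    intro t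
    rw [psi_succ_eq_of_antiperiodic hq ih, psi_succ_eq_of_antiperiodic hq ih,
      integral_add_of_antiperiodic ih (intervalIntegrable_psi m a b c)]
    ring

theorem psi_two_mul_sub (ha : 0 ≤ a) (hq : 0 < a + b + c) (m : ℕ)
    (ht : t ∈ Set.Icc 0 (2 * (a + b + c))) :
    psi m a b c (2 * (a + b + c) - t) = (-1) ^ m * psi m a b c t := by
  induction m generalizing t with
  | zero => simpa [psi] using psiZero_two_mul_sub hq ht
  | succ m ih =>
    have hreflect {t : ℝ} (ht : t ∈ Set.Icc 0 (2 * (a + b + c))) :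
        ∫ x in (2 * (a + b + c) - t)..(2 * (a + b + c)), psi m a b c x =
          (-1) ^ m * ∫ x in 0..t, psi m a b c x := by
      have hsub := intervalIntegral.integral_comp_sub_left (a := 0) (b := t) (psi m a b c)
        (2 * (a + b + c))
      rw [sub_zero] at hsub
      rw [← hsub, ← intervalIntegral.integral_const_mul]
      refine intervalIntegral.integral_congr fun x hx => ih ?_
      rw [Set.uIcc_of_le ht.1] at hx
      exact ⟨hx.1, hx.2.trans ht.2⟩
    have hfull := hreflect ⟨by positivity, le_rfl⟩
    have hsplit := intervalIntegral.integral_add_adjacent_intervals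
      (intervalIntegrable_psi m a b c 0 (2 * (a + b + c) - t))
      (intervalIntegrable_psi m a b c _ (2 * (a + b + c)))
    rw [hreflect ht] at hsplit
    rw [sub_self] at hfull
    rw [psi_succ_eq_of_antiperiodic hq (antiperiodic_psi ha hq m),
      psi_succ_eq_of_antiperiodic hq (antiperiodic_psi ha hq m), pow_succ]
    linear_combination hsplit + hfull / 2

theorem psi_apply_zero_of_even (ha : 0 ≤ a) (hq : 0 < a + b + c) {m : ℕ} (hm : Even m) :
    psi m a b c 0 = 0 := by
  have hreflect := psi_two_mul_sub ha hq m (t := 0) ⟨le_rfl, by positivity⟩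
  have hanti := antiperiodic_psi ha hq m 0
  rw [sub_zero, hm.neg_one_pow, one_mul] at hreflect
  rw [zero_add] at hanti
  linarith

theorem psi_apply_quarter_of_odd (ha : 0 ≤ a) (hq : 0 < a + b + c) {m : ℕ} (hm : Odd m) :
    psi m a b c (a + b + c) = 0 := by
  have hreflect := psi_two_mul_sub ha hq m (t := a + b + c) ⟨hq.le, by linarith⟩
  rw [hm.neg_one_pow, two_mul, add_sub_cancel_right] at hreflect
  linarith

theorem abs_psi_le_of_forall_mem_Icc (ha : 0 ≤ a) (hq : 0 < a + b + c) (m : ℕ) {A : ℝ}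
    (hA : ∀ t ∈ Set.Icc 0 (a + b + c), |psi m a b c t| ≤ A) (t : ℝ) : |psi m a b c t| ≤ A := by
  have hperiodic : Function.Periodic (fun t => |psi m a b c t|) (2 * (a + b + c)) := fun t => by
    simp only [antiperiodic_psi ha hq m t, abs_neg]
  obtain ⟨s, ⟨hs0, hs⟩, heq⟩ := hperiodic.exists_mem_Ico₀ (by positivity) t
  refine heq.trans_le ?_
  rcases le_total s (a + b + c) with hsq | hsq
  · exact hA s ⟨hs0, hsq⟩
  · have habs : |psi m a b c (2 * (a + b + c) - s)| = |psi m a b c s| := by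
      rw [psi_two_mul_sub ha hq m ⟨hs0, hs.le⟩, abs_mul, abs_neg_one_pow, one_mul]
    exact habs ▸ hA _ ⟨by linarith, by linarith⟩

theorem iteratedDeriv_psi (j m : ℕ) (a b c : ℝ) :
    iteratedDeriv j (psi (m + 1 + j) a b c) = psi (m + 1) a b c := by
  induction j with
  | zero => exact iteratedDeriv_zero
  | succ j ih =>
    have hderiv : deriv (psi (m + 1 + (j + 1)) a b c) = psi (m + 1 + j) a b c := funext fun t => by
      rw [show m + 1 + (j + 1) = m + j + 2 by ring, show m + 1 + j = m + j + 1 by ring]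
      exact (hasDerivAt_psi_succ_succ (m + j) a b c t).deriv
    rw [iteratedDeriv_succ', hderiv, ih]

theorem lipschitzWith_psi_one (a b c : ℝ) : LipschitzWith 1 (psi 1 a b c) :=
  LipschitzWith.of_dist_le_mul fun x y => by
    rw [Real.dist_eq, Real.dist_eq, psi_succ_sub_psi_succ 0 a b c y x, NNReal.coe_one]
    exact intervalIntegral.norm_integral_le_of_norm_le_const (f := psiZero a b c) fun t _ =>
      abs_psiZero_le_one a b c t

end Psi

section PsiQuarterWave

variable {b c t : ℝ}

theorem psiZero_eq_indicator (hb : 0 < b) (hc : 0 ≤ c) (ht : t ∈ Set.Ioc 0 (b + c)) :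
    psiZero 0 b c t = Set.indicator (Set.Iic b) 1 t := by
  rw [psiZero_of_mem_Icc (by linarith) ⟨ht.1.le, by linarith [ht.1, ht.2]⟩]
  simp [psiHalf, psiBase, Set.indicator_apply, ht.1.not_ge, ht.2]

theorem psi_one_eq (hb : 0 < b) (hc : 0 ≤ c) (ht : t ∈ Set.Icc 0 (b + c)) :
    psi 1 0 b c t = -max (b - t) 0 := by
  have hzero : psi 1 0 b c (b + c) = 0 := by
    simpa only [zero_add] using psi_apply_quarter_of_odd (a := 0) (b := b) (c := c) le_rfl
      (by linarith) odd_one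
  have hintegral : ∫ x in t..(b + c), psiZero 0 b c x = max (b - t) 0 := by
    rw [intervalIntegral.integral_of_le ht.2,
      setIntegral_congr_fun measurableSet_Ioc fun x hx =>
        psiZero_eq_indicator hb hc ⟨ht.1.trans_lt hx.1, hx.2⟩,
      setIntegral_indicator measurableSet_Iic]
    simp [Set.Ioc_inter_Iic, min_eq_right (le_add_of_nonneg_right hc : b ≤ b + c)]
  have hsub : psi 1 0 b c (b + c) - psi 1 0 b c t = ∫ x in t..(b + c), psiZero 0 b c x :=
    psi_succ_sub_psi_succ 0 0 b c t (b + c)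
  linarith

theorem hasDerivAt_max_zero_sq_div_two (x : ℝ) :
    HasDerivAt (fun y : ℝ => max y 0 ^ 2 / 2) (max x 0) x := by
  refine hasDerivAt_of_hasDerivAt_of_ne' (f := fun y : ℝ => max y 0 ^ 2 / 2)
    (g := fun y => max y 0) (x := 0) (fun y hy => ?_) (by fun_prop) (by fun_prop) x
  rcases hy.lt_or_gt with hneg | hpos
  · rw [max_eq_right hneg.le]
    refine (hasDerivAt_const y 0).congr_of_eventuallyEq ?_
    filter_upwards [Iio_mem_nhds hneg] with z hz
    simp [max_eq_right (Set.mem_Iio.1 hz).le]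
  · rw [max_eq_left hpos.le]
    refine (((hasDerivAt_pow 2 y).div_const 2).congr_deriv (by simp)).congr_of_eventuallyEq ?_
    filter_upwards [Ioi_mem_nhds hpos] with z hz
    rw [max_eq_left (Set.mem_Ioi.1 hz).le]

theorem psi_two_eq (hb : 0 < b) (hc : 0 ≤ c) (ht : t ∈ Set.Icc 0 (b + c)) :
    psi 2 0 b c t = -quarterWave b 0 c (b + c - t) := by
  have hzero : psi 2 0 b c 0 = 0 :=
    psi_apply_zero_of_even le_rfl (by linarith) even_two
  have hintegral : ∫ x in 0..t, psi 1 0 b c x = max (b - t) 0 ^ 2 / 2 - max (b - 0) 0 ^ 2 / 2 :=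
    intervalIntegral.integral_eq_sub_of_hasDerivAt (fun x hx => by
      rw [Set.uIcc_of_le ht.1] at hx
      rw [psi_one_eq hb hc ⟨hx.1, hx.2.trans ht.2⟩]
      exact (hasDerivAt_max_zero_sq_div_two (b - x)).comp_const_sub b x)
      (intervalIntegrable_psi 1 0 b c 0 t)
  have hsub := psi_succ_sub_psi_succ 1 0 b c 0 t
  rw [hintegral, hzero, sub_zero, sub_zero, max_eq_left hb.le] at hsub
  simp only [hsub, quarterWave, show b + c - t - c = b - t by ring, neg_sub]

theorem psi_succ_eq_of_even {i m : ℕ} {ε : ℝ} (hb : 0 < b) (hc : 0 ≤ c) (hm : Even m)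
    (hψ : ∀ t ∈ Set.Icc 0 (b + c), psi m 0 b c t = ε * quarterWave b i c (b + c - t))
    (ht : t ∈ Set.Icc 0 (b + c)) : psi (m + 1) 0 b c t = -ε * quarterWave b (i + 1) c t := by
  have hzero : psi (m + 1) 0 b c (b + c) = 0 := by
    simpa only [zero_add] using psi_apply_quarter_of_odd (a := 0) (b := b) (c := c) le_rfl
      (by linarith) hm.add_one
  have hintegral : ∫ x in t..(b + c), psi m 0 b c x = ε * quarterWave b (i + 1) c t := by
    have hcongr : ∫ x in t..(b + c), psi m 0 b c x =
        ∫ x in t..(b + c), ε * quarterWave b i c (b + c - x) :=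
      intervalIntegral.integral_congr fun x hx => by
        rw [Set.uIcc_of_le ht.2] at hx
        exact hψ x ⟨ht.1.trans hx.1, hx.2⟩
    rw [hcongr, intervalIntegral.integral_const_mul,
      intervalIntegral.integral_comp_sub_left (quarterWave b i c), sub_self, quarterWave]
  linarith [psi_succ_sub_psi_succ m 0 b c t (b + c)]

theorem psi_succ_eq_of_odd {i m : ℕ} {ε : ℝ} (hb : 0 < b) (hc : 0 ≤ c) (hm : Odd m)
    (hψ : ∀ t ∈ Set.Icc 0 (b + c), psi m 0 b c t = ε * quarterWave b i c t)
    (ht : t ∈ Set.Icc 0 (b + c)) :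
    psi (m + 1) 0 b c t = ε * quarterWave b (i + 1) c (b + c - t) := by
  have hzero : psi (m + 1) 0 b c 0 = 0 :=
    psi_apply_zero_of_even le_rfl (by linarith) hm.add_one
  have hintegral : ∫ x in 0..t, psi m 0 b c x = ε * quarterWave b (i + 1) c (b + c - t) := by
    have hcongr : ∫ x in 0..t, psi m 0 b c x = ∫ x in 0..t, ε * quarterWave b i c x :=
      intervalIntegral.integral_congr fun x hx => by
        rw [Set.uIcc_of_le ht.1] at hx
        exact hψ x ⟨hx.1, hx.2.trans ht.2⟩
    simp only [hcongr, intervalIntegral.integral_const_mul, quarterWave, sub_sub_cancel]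
  linarith [psi_succ_sub_psi_succ m 0 b c 0 t]

theorem exists_psi_eq_mul_quarterWave (hb : 0 < b) (hc : 0 ≤ c) (i : ℕ) :
    ∃ ε : ℝ, |ε| = 1 ∧ ∀ t ∈ Set.Icc 0 (b + c),
      psi (i + 2) 0 b c t = ε * quarterWave b i c (if Even i then b + c - t else t) := by
  induction i with
  | zero =>
    exact ⟨-1, by rw [abs_neg, abs_one], fun t ht => by simp [psi_two_eq hb hc ht]⟩
  | succ i ih =>
    obtain ⟨ε, hε, hψ⟩ := ih
    rcases i.even_or_odd with hi | hi
    · simp only [hi, if_true] at hψ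
      refine ⟨-ε, by rwa [abs_neg], fun t ht => ?_⟩
      simpa only [Nat.even_add_one, hi, not_true, if_false] using
        psi_succ_eq_of_even hb hc (hi.add even_two) hψ ht
    · simp only [Nat.not_even_iff_odd.2 hi, if_false] at hψ
      refine ⟨ε, hε, fun t ht => ?_⟩
      simpa only [hi.add_one, if_true] using psi_succ_eq_of_odd hb hc (hi.add_even even_two) hψ ht

theorem abs_psi_le_quarterWave (hb : 0 < b) (hc : 0 ≤ c) (i : ℕ) (t : ℝ) :
    |psi (i + 2) 0 b c t| ≤ quarterWave b i c 0 := by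
  obtain ⟨ε, hε, hψ⟩ := exists_psi_eq_mul_quarterWave hb hc i
  refine abs_psi_le_of_forall_mem_Icc le_rfl (by linarith) (i + 2) (fun t ht => ?_) t
  rw [zero_add] at ht
  have harg : (if Even i then b + c - t else t) ∈ Set.Icc 0 (b + c) := by
    split_ifs
    · exact ⟨by linarith [ht.2], by linarith [ht.1]⟩
    · exact ht
  rw [hψ t ht, abs_mul, hε, one_mul, abs_of_nonneg (quarterWave_nonneg hb i harg)]
  exact quarterWave_le_apply_zero hb i hc harg

theorem exists_psi_eq_quarterWave_apply_zero (hb : 0 < b) (hc : 0 ≤ c) (i : ℕ) :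
    ∃ t, psi (i + 2) 0 b c t = quarterWave b i c 0 := by
  obtain ⟨ε, hε, hψ⟩ := exists_psi_eq_mul_quarterWave hb hc i
  obtain ⟨s, hs⟩ : ∃ s, psi (i + 2) 0 b c s = ε * quarterWave b i c 0 := by
    refine ⟨if Even i then b + c else 0, ?_⟩
    rw [hψ _ (by split_ifs <;> constructor <;> linarith)]
    split_ifs <;> simp
  rcases eq_or_eq_neg_of_abs_eq hε with rfl | rfl
  · exact ⟨s, by rw [hs, one_mul]⟩
  · refine ⟨s + 2 * (0 + b + c), ?_⟩
    rw [antiperiodic_psi le_rfl (by linarith) (i + 2) s, hs, neg_one_mul, neg_neg]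

theorem unif_psi (hb : 0 < b) (hc : 0 ≤ c) (i : ℕ) :
    unif (psi (i + 2) 0 b c) = quarterWave b i c 0 := by
  obtain ⟨t, ht⟩ := exists_psi_eq_quarterWave_apply_zero hb hc i
  exact unif_eq_of_apply_eq (abs_psi_le_quarterWave hb hc i) ht

theorem unif_deriv_psi_one (hb : 0 < b) (hc : 0 ≤ c) : unif (deriv (psi 1 0 b c)) = 1 := by
  refine unif_eq_of_apply_eq (x := b / 2)
    (fun t => by simpa using norm_deriv_le_of_lipschitz (lipschitzWith_psi_one 0 b c)) ?_
  have hlinear : psi 1 0 b c =ᶠ[nhds (b / 2)] fun t => t - b := by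
    filter_upwards [Ioo_mem_nhds (half_pos hb) (half_lt_self hb)] with t ht
    rw [psi_one_eq hb hc ⟨ht.1.le, by linarith [ht.2]⟩, max_eq_left (sub_nonneg.2 ht.2.le), neg_sub]
  rw [hlinear.deriv_eq, deriv_sub_const, deriv_id'']

variable {α d : ℝ}

theorem M_zero_const_mul_psi_add_const (hα : 0 ≤ α) (hb : 0 < b) (hc : 0 ≤ c) (hd : 0 ≤ d) (i : ℕ) :
    M 0 (fun t => α * psi (i + 2) 0 b c t + d) = α * quarterWave b i c 0 + d := by
  obtain ⟨t, ht⟩ := exists_psi_eq_quarterWave_apply_zero hb hc i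
  rw [M, iteratedDeriv_zero]
  refine unif_add_const_of_apply_eq (x := t) hd (fun s => ?_) (by rw [ht])
  rw [abs_mul, abs_of_nonneg hα]
  exact mul_le_mul_of_nonneg_left (abs_psi_le_quarterWave hb hc i s) hα

theorem M_const_mul_psi_add_const {i j r : ℕ} (hα : 0 ≤ α) (hb : 0 < b) (hc : 0 ≤ c) (d : ℝ)
    (hj : 0 < j) (hr : r = i + 2 + j) :
    M j (fun t => α * psi r 0 b c t + d) = α * quarterWave b i c 0 := by
  rw [M_const_mul_add_const hα d hj (psi r 0 b c), M, hr, iteratedDeriv_psi j (i + 1),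
    unif_psi hb hc]

theorem M_succ_const_mul_psi_add_const (hα : 0 ≤ α) (hb : 0 < b) (hc : 0 ≤ c) (d : ℝ) (n : ℕ) :
    M (n + 1) (fun t => α * psi (n + 1) 0 b c t + d) = α := by
  have hderiv : iteratedDeriv n (psi (n + 1) 0 b c) = psi 1 0 b c := by
    simpa only [zero_add, add_comm 1 n] using iteratedDeriv_psi n 0 0 b c
  rw [M_const_mul_add_const hα d n.succ_pos (psi (n + 1) 0 b c), M, iteratedDeriv_succ, hderiv,
    unif_deriv_psi_one hb hc, mul_one]

end PsiQuarterWave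

/-- **Solution of the Kolmogorov problem for orders `(0,k,r-2,r)`.** For every
non-constant `f ∈ L^r_{∞,∞}` there are `α, b > 0` and `c, d ≥ 0` such that
`g = α ψ_r(0,b,c) + d` has the same norms `M_0`, `M_k`, `M_{r-2}`, `M_r` as `f`. -/
theorem stmt18 (r k : ℕ) (hr : 4 ≤ r) (hk : 0 < k) (hkr : k < r - 2)
    (f : ℝ → ℝ) (hf : MemL r f) (hnc : ∃ x y : ℝ, f x ≠ f y) :
    ∃ α b c d : ℝ, 0 < α ∧ 0 < b ∧ 0 ≤ c ∧ 0 ≤ d ∧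
      M 0 (fun t => α * psi r 0 b c t + d) = M 0 f ∧
      M k (fun t => α * psi r 0 b c t + d) = M k f ∧
      M (r - 2) (fun t => α * psi r 0 b c t + d) = M (r - 2) f ∧
      M r (fun t => α * psi r 0 b c t + d) = M r f := by
  obtain ⟨m, rfl⟩ : ∃ m, r = k + m + 2 := ⟨r - 2 - k, by omega⟩
  rw [Nat.add_sub_cancel]
  have hα : 0 < M (k + m + 2) f := hf.M_succ_pos hnc
  obtain ⟨b, hb, hmatch⟩ := hf.exists_isMatched hnc
  obtain ⟨c, hc, hmatch_k⟩ := hmatch.exists_iteratedDeriv hα hb hf (Nat.le_succ _)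
  obtain ⟨c', hcc', hmatch_zero⟩ : ∃ c' ≥ c, IsMatched _ b (0 + m + k) c' (iteratedDeriv 0 f) :=
    IsMatched.exists_iteratedDeriv (by rwa [zero_add k]) hα hb hf (by omega)
  rw [zero_add] at hmatch_k
  rw [zero_add, add_comm m k] at hmatch_zero
  have hmono : quarterWave b (k + m) c 0 ≤ quarterWave b (k + m) c' 0 :=
    quarterWave_mono_plateau hb (k + m) hcc' ⟨le_rfl, by positivity⟩
  have hd := mul_nonneg hα.le (sub_nonneg.2 hmono)
  refine ⟨_, b, c, _, hα, hb, hc, hd, ?_, ?_, ?_, ?_⟩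
  · rw [M_zero_const_mul_psi_add_const hα.le hb hc hd, ← mul_add, add_sub_cancel]
    exact hmatch_zero.unif_eq.symm
  · rw [M_const_mul_psi_add_const hα.le hb hc _ hk (i := m) (by ring)]
    exact hmatch_k.unif_eq.symm
  · rw [M_const_mul_psi_add_const hα.le hb hc _ (by omega) (i := 0) (by ring),
      quarterWave_zero_of_le b hc, ← quarterWave_zero_of_le b le_rfl]
    exact hmatch.unif_eq.symm
  · exact M_succ_const_mul_psi_add_const hα.le hb hc _ (k + m + 1)
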